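/- arXiv:1902.08393 — 2 statements merged into one kernel-verified Lean document; each statement's English description precedes it below -/
import Mathlib

section
/- Let ϑ₁, ϑ₂ be Beurling weights on ℝ^d, let 1 < p, q, r < ∞, and let p', q', r' be the conjugate exponents (1/p + 1/p' = 1, etc.). Let K be the set of pairs (φ, ψ) ∈ (L^{p'}_{ϑ₁^{-1}}, ℓ^∞) × (L^{q'}_{ϑ₂^{-1}}, ℓ^{r'}) such that ∫_{ℝ^d} f(x)φ(x) dx + ∫_{ℝ^d} f̂(y)ψ(y) dy = 0 for all f ∈ A^{p,1,q,r}_{ϑ₁,ϑ₂}(ℝ^d). Then the continuous dual space of A^{p,1,q,r}_{ϑ₁,ϑ₂}(ℝ^d) is isomorphic, via a bounded linear bijection with bounded inverse, to the quotient Banach space ((L^{p'}_{ϑ₁^{-1}}, ℓ^∞) × (L^{q'}_{ϑ₂^{-1}}, ℓ^{r'}))/K. -/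
open MeasureTheory Filter Topology
open scoped ENNReal NNReal BigOperators

noncomputable section

/-- The unit cube `α + [0,1)^d` at the integer point `α ∈ ℤ^d`. -/
def cube {d : ℕ} (α : Fin d → ℤ) : Set (Fin d → ℝ) :=
  Set.univ.pi fun i => Set.Ico (α i : ℝ) ((α i : ℝ) + 1)

/-- The weighted amalgam norm `‖f‖_{pq,ω}` of the space `(L^p_ω, ℓ^q)`. -/
def amalgamNorm {d : ℕ} (p q : ℝ) (ω : (Fin d → ℝ) → ℝ) (f : (Fin d → ℝ) → ℂ) : ℝ≥0∞ :=
  (∑' α : Fin d → ℤ,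
      (eLpNorm (fun x => ω x • f x) (ENNReal.ofReal p) (volume.restrict (cube α))) ^ q) ^ (1 / q)

/-- Membership in the weighted amalgam space `(L^p_ω, ℓ^q)`. -/
def MemAmalgam {d : ℕ} (p q : ℝ) (ω : (Fin d → ℝ) → ℝ) (f : (Fin d → ℝ) → ℂ) : Prop :=
  Measurable f ∧ amalgamNorm p q ω f < ⊤

/-- A Beurling weight: measurable, `ϑ ≥ 1` and submultiplicative. -/
def IsBeurling {d : ℕ} (ϑ : (Fin d → ℝ) → ℝ) : Prop :=
  Measurable ϑ ∧ (∀ x, 1 ≤ ϑ x) ∧ ∀ x y, ϑ (x + y) ≤ ϑ x * ϑ y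

/-- The Fourier transform `f̂(ξ) = ∫ f(x) e^{-2πi⟨x,ξ⟩} dx`. -/
def fourierT {d : ℕ} (f : (Fin d → ℝ) → ℂ) (ξ : Fin d → ℝ) : ℂ :=
  ∫ x : Fin d → ℝ,
    Complex.exp (-(2 * (Real.pi : ℂ) * Complex.I * ∑ i, (x i : ℂ) * (ξ i : ℂ))) * f x

/-- The norm of `A^{p,1,q,r}_{ϑ₁,ϑ₂}(ℝ^d)`. -/
def ANorm {d : ℕ} (p q r : ℝ) (ϑ₁ ϑ₂ : (Fin d → ℝ) → ℝ) (f : (Fin d → ℝ) → ℂ) : ℝ≥0∞ :=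
  amalgamNorm p 1 ϑ₁ f + amalgamNorm q r ϑ₂ (fourierT f)

/-- Membership in `A^{p,1,q,r}_{ϑ₁,ϑ₂}(ℝ^d)`. -/
def MemA {d : ℕ} (p q r : ℝ) (ϑ₁ ϑ₂ : (Fin d → ℝ) → ℝ) (f : (Fin d → ℝ) → ℂ) : Prop :=
  MemAmalgam p 1 ϑ₁ f ∧ MemAmalgam q r ϑ₂ (fourierT f)

/-- Convolution `(f∗g)(x) = ∫ f(x−t)g(t) dt`. -/
def convF {d : ℕ} (f g : (Fin d → ℝ) → ℂ) (x : Fin d → ℝ) : ℂ :=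
  ∫ t : Fin d → ℝ, f (x - t) * g t

/-- `ϑ ≺ ϑ'` : domination of weights up to a constant. -/
def Prec {d : ℕ} (ϑ ϑ' : (Fin d → ℝ) → ℝ) : Prop :=
  ∃ C : ℝ, 0 < C ∧ ∀ x, ϑ x ≤ C * ϑ' x

/-- The Beurling–Domar condition `∑_{n≥1} log ϑ(nx)/n² < ∞`. -/
def BeurlingDomar {d : ℕ} (ϑ : (Fin d → ℝ) → ℝ) : Prop :=
  ∀ x : Fin d → ℝ, Summable fun n : ℕ => Real.log (ϑ ((n : ℝ) • x)) / (n : ℝ) ^ 2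

/-- `w` does not tend to zero as `|x| → ∞`. -/
def NotVanishingAtInfty {d : ℕ} (w : (Fin d → ℝ) → ℝ) : Prop :=
  ∃ δ : ℝ, 0 < δ ∧ ∀ R : ℝ, 0 < R → ∃ x : Fin d → ℝ, R < ‖x‖ ∧ δ ≤ w x

end

/-- The weighted amalgam `ℓ^∞`-type norm of `(L^p_ω, ℓ^∞)`. -/
noncomputable def amalgamNormTop {d : ℕ} (p : ℝ) (ω : (Fin d → ℝ) → ℝ)
    (f : (Fin d → ℝ) → ℂ) : ℝ≥0∞ :=
  ⨆ α : Fin d → ℤ, eLpNorm (fun x => ω x • f x) (ENNReal.ofReal p) (volume.restrict (cube α))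

/-- Membership in `(L^p_ω, ℓ^∞)`. -/
def MemAmalgamTop {d : ℕ} (p : ℝ) (ω : (Fin d → ℝ) → ℝ) (f : (Fin d → ℝ) → ℂ) : Prop :=
  Measurable f ∧ amalgamNormTop p ω f < ⊤

/-- The natural pairing of a pair `(φ, ψ)` with an element `f` of
`A^{p,1,q,r}_{ϑ₁,ϑ₂}(ℝ^d)`: `⟨(φ,ψ), f⟩ = ∫ f φ + ∫ f̂ ψ`. -/
noncomputable def pairA {d : ℕ} (φ ψ f : (Fin d → ℝ) → ℂ) : ℂ :=
  (∫ x : Fin d → ℝ, f x * φ x) + ∫ y : Fin d → ℝ, fourierT f y * ψ y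


section LpDual
variable {α : Type*} [MeasurableSpace α] {μ : Measure α}

lemma aux_ident [IsFiniteMeasure μ] {p q : ℝ} (hpq : p.HolderConjugate q) [Fact (1 ≤ ENNReal.ofReal p)]
    (Λ : StrongDual ℂ (Lp ℂ (ENNReal.ofReal p) μ)) {g : α → ℂ}
    (hg : MemLp g (ENNReal.ofReal q) μ)
    (h : ∀ (s : Set α) (hs : MeasurableSet s),
      Λ (indicatorConstLp (ENNReal.ofReal p) hs (measure_ne_top μ s) (1:ℂ)) = ∫ x in s, g x ∂μ)
    (f : Lp ℂ (ENNReal.ofReal p) μ) : Λ f = ∫ x, f x * g x ∂μ := by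
  have : ENNReal.HolderConjugate (ENNReal.ofReal p) (ENNReal.ofReal q) := hpq.ennrealOfReal
  have : Fact (1 ≤ ENNReal.ofReal q) := ⟨by
    rw [ENNReal.one_le_ofReal]; exact hpq.symm.lt.le⟩
  let Ψ : StrongDual ℂ (Lp ℂ (ENNReal.ofReal p) μ) :=
    ((ContinuousLinearMap.mul ℂ ℂ).lpPairing μ (ENNReal.ofReal p) (ENNReal.ofReal q)).flip
      (hg.toLp g)
  have hΨ : ∀ f, Ψ f = ∫ x, f x * g x ∂μ := by
    intro f
    show ((ContinuousLinearMap.mul ℂ ℂ).lpPairing μ (ENNReal.ofReal p) (ENNReal.ofReal q)) f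
      (hg.toLp g) = _
    rw [ContinuousLinearMap.lpPairing_eq_integral]
    refine integral_congr_ae ?_
    filter_upwards [hg.coeFn_toLp] with x hx
    simp [hx]
  rw [← hΨ]
  refine Lp.induction ENNReal.ofReal_ne_top (fun f => Λ f = Ψ f) ?_ ?_ ?_ f
  · intro c s hs hμs
    have e : ((Lp.simpleFunc.indicatorConst (ENNReal.ofReal p) hs hμs.ne c :
        Lp.simpleFunc ℂ (ENNReal.ofReal p) μ) : Lp ℂ (ENNReal.ofReal p) μ)
        = c • indicatorConstLp (ENNReal.ofReal p) hs (measure_ne_top μ s) (1:ℂ) := by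
      rw [Lp.simpleFunc.coe_indicatorConst]
      ext1
      filter_upwards [indicatorConstLp_coeFn (p := ENNReal.ofReal p) (hs := hs) (hμs := hμs.ne)
        (c := c), Lp.coeFn_smul c (indicatorConstLp (ENNReal.ofReal p) hs (measure_ne_top μ s)
        (1:ℂ)), indicatorConstLp_coeFn (p := ENNReal.ofReal p) (hs := hs)
        (hμs := measure_ne_top μ s) (c := (1:ℂ))] with x h1 h2 h3
      rw [h1, h2, Pi.smul_apply, h3]
      by_cases hx : x ∈ s <;> simp [hx]
    rw [e, map_smul, map_smul, h, hΨ, ← integral_indicator hs]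
    congr 1
    refine integral_congr_ae ?_
    filter_upwards [indicatorConstLp_coeFn (p := ENNReal.ofReal p) (hs := hs)
        (hμs := measure_ne_top μ s) (c := (1:ℂ))] with x h3
    rw [h3]
    by_cases hx : x ∈ s <;> simp [hx]
  · intro f g hf hg _ h1 h2
    rw [map_add, map_add, h1, h2]
  · exact isClosed_eq Λ.continuous Ψ.continuous

lemma aux_norm {p q : ℝ} (hpq : p.HolderConjugate q) [Fact (1 ≤ ENNReal.ofReal p)]
    (Λ : StrongDual ℂ (Lp ℂ (ENNReal.ofReal p) μ)) {g : α → ℂ} (hgm : Measurable g)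
    (hg : MemLp g (ENNReal.ofReal q) μ)
    (h : ∀ f : Lp ℂ (ENNReal.ofReal p) μ, Λ f = ∫ x, f x * g x ∂μ) :
    eLpNorm g (ENNReal.ofReal q) μ ≤ ENNReal.ofReal ‖Λ‖ := by
  have hp0 := hpq.pos
  have hq0 := hpq.symm.pos
  have hq1 := hpq.symm.lt
  have hqm : (q - 1) * p = q := by
    have := hpq.symm.sub_one_mul_conj; exact this
  have en : ∀ {s : ℝ} (_ : 0 < s) (u : α → ℂ), eLpNorm u (ENNReal.ofReal s) μ =
      (∫⁻ x, ‖u x‖ₑ ^ s ∂μ) ^ (1 / s) := by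
    intro s hs u
    rw [eLpNorm_eq_lintegral_rpow_enorm_toReal (by simpa using hs) (by simp),
      ENNReal.toReal_ofReal hs.le]
  set I := ∫⁻ x, ‖g x‖ₑ ^ q ∂μ with hI
  have hgn : eLpNorm g (ENNReal.ofReal q) μ = I ^ (1 / q) := en hq0 g
  have hIt : I ≠ ⊤ := by
    intro hh
    have := hg.2
    rw [hgn, hh, ENNReal.top_rpow_of_pos (by positivity)] at this
    exact lt_irrefl _ this
  let f : α → ℂ := fun x => (starRingEnd ℂ) (g x) * ((‖g x‖ ^ (q - 2) : ℝ) : ℂ)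
  have hfm : Measurable f := by
    have : Measurable fun x => (starRingEnd ℂ) (g x) := Complex.continuous_conj.measurable.comp hgm
    have h2 : Measurable fun x => ((‖g x‖ ^ (q - 2) : ℝ) : ℂ) :=
      Complex.measurable_ofReal.comp (hgm.norm.pow_const _)
    exact this.mul h2
  have hfn : ∀ x, ‖f x‖ = ‖g x‖ ^ (q - 1) := by
    intro x
    simp only [f, norm_mul, RCLike.norm_conj, Complex.norm_real, Real.norm_eq_abs]
    rw [abs_of_nonneg (by positivity)]
    rcases eq_or_ne (g x) 0 with h0 | h0
    · rw [h0, norm_zero, zero_mul, Real.zero_rpow (by linarith)]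
    · have : 0 < ‖g x‖ := norm_pos_iff.2 h0
      nth_rewrite 1 [← Real.rpow_one ‖g x‖]
      rw [← Real.rpow_add this]; congr 1; ring
  have hfg : ∀ x, f x * g x = ((‖g x‖ ^ q : ℝ) : ℂ) := by
    intro x
    simp only [f]
    have : (starRingEnd ℂ) (g x) * g x = ((‖g x‖ ^ 2 : ℝ) : ℂ) := by
      rw [mul_comm, Complex.mul_conj, Complex.normSq_eq_norm_sq]
    rw [mul_right_comm, this, ← Complex.ofReal_mul]
    congr 1
    rcases eq_or_ne (g x) 0 with h0 | h0
    · rw [h0, norm_zero, Real.zero_rpow hq0.ne']; simp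
    · have : 0 < ‖g x‖ := norm_pos_iff.2 h0
      rw [← Real.rpow_natCast, ← Real.rpow_add this]; congr 1; push_cast; ring
  have hfe : ∀ x, ‖f x‖ₑ ^ p = ‖g x‖ₑ ^ q := by
    intro x
    rw [← ofReal_norm, hfn, ← ofReal_norm, ENNReal.ofReal_rpow_of_nonneg (by positivity) hp0.le,
      ENNReal.ofReal_rpow_of_nonneg (by positivity) hq0.le, ← Real.rpow_mul (norm_nonneg _), hqm]
  have hfN : eLpNorm f (ENNReal.ofReal p) μ = I ^ (1 / p) := by
    rw [en hp0]; simp_rw [hfe]; rfl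
  have hfL : MemLp f (ENNReal.ofReal p) μ := ⟨hfm.aestronglyMeasurable, by
    rw [hfN]; exact ENNReal.rpow_lt_top_of_nonneg (by positivity) hIt⟩
  have key : I ≤ ENNReal.ofReal ‖Λ‖ * I ^ (1 / p) := by
    have h1 := h (hfL.toLp f)
    have h2 : ∫ x, (hfL.toLp f) x * g x ∂μ = ((∫ x, ‖g x‖ ^ q ∂μ : ℝ) : ℂ) := by
      rw [← integral_complex_ofReal]
      refine integral_congr_ae ?_
      filter_upwards [hfL.coeFn_toLp] with x hx
      rw [hx, hfg]
    have h3 : ENNReal.ofReal (∫ x, ‖g x‖ ^ q ∂μ) = I := by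
      rw [integral_eq_lintegral_of_nonneg_ae (ae_of_all _ fun x => by positivity)
        (hgm.norm.pow_const _).aestronglyMeasurable]
      have : ∀ x, ENNReal.ofReal (‖g x‖ ^ q) = ‖g x‖ₑ ^ q := fun x => by
        rw [← ofReal_norm, ENNReal.ofReal_rpow_of_nonneg (by positivity) hq0.le]
      simp_rw [this]
      exact ENNReal.ofReal_toReal hIt
    have h4 := Λ.le_opNorm (hfL.toLp f)
    rw [h1, h2, Complex.norm_real, Real.norm_eq_abs, Lp.norm_toLp, hfN] at h4
    rw [← h3]
    refine (ENNReal.ofReal_le_ofReal ((le_abs_self _).trans h4)).trans ?_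
    rw [ENNReal.ofReal_mul (norm_nonneg _), h3, ENNReal.ofReal_toReal]
    exact ENNReal.rpow_ne_top_of_nonneg (by positivity) hIt
  rw [hgn]
  rcases eq_or_ne I 0 with h0 | h0
  · rw [h0, ENNReal.zero_rpow_of_pos (by positivity)]; exact zero_le
  · have hne0 : I ^ (1 / p) ≠ 0 := by
      intro hh; rw [ENNReal.rpow_eq_zero_iff] at hh; rcases hh with hh | hh
      · exact h0 hh.1
      · exact hIt hh.1
    have hnet : I ^ (1 / p) ≠ ⊤ := ENNReal.rpow_ne_top_of_nonneg (by positivity) hIt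
    have hs : I = I ^ (1 / q) * I ^ (1 / p) := by
      rw [← ENNReal.rpow_add _ _ h0 hIt]
      have : 1 / q + 1 / p = 1 := by
        have := hpq.symm.inv_add_inv_eq_one; simpa using this
      rw [this, ENNReal.rpow_one]
    rw [hs] at key
    have key' : I ^ (1 / q) * I ^ (1 / p) ≤ ENNReal.ofReal ‖Λ‖ * I ^ (1 / p) := by
      convert key using 2
      rw [← hs]
    exact (ENNReal.mul_le_mul_iff_left hne0 hnet).1 key'

lemma aux_hasSum [IsFiniteMeasure μ] {P : ℝ≥0∞} [Fact (1 ≤ P)] (hP : P ≠ ⊤)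
    (f : ℕ → Set α) (hf : ∀ i, MeasurableSet (f i)) (hd : Pairwise (Function.onFun Disjoint f)) :
    HasSum (fun i => indicatorConstLp P (hf i) (measure_ne_top μ (f i)) (1:ℂ))
      (indicatorConstLp P (MeasurableSet.iUnion hf) (measure_ne_top μ (⋃ i, f i)) (1:ℂ)) := by
  have hm : ∀ F : Finset ℕ, MeasurableSet (⋃ i ∈ F, f i) := fun F =>
    F.measurableSet_biUnion fun i _ => hf i
  have hsum : ∀ F : Finset ℕ,
      ∑ i ∈ F, indicatorConstLp P (hf i) (measure_ne_top μ (f i)) (1:ℂ)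
        = indicatorConstLp P (hm F) (measure_ne_top μ _) (1:ℂ) := by
    intro F
    induction F using Finset.induction_on with
    | empty => 
      rw [Finset.sum_empty, ← indicatorConstLp_empty (p := P) (μ := μ) (c := (1:ℂ))]
      congr 1
      simp
    | insert a F ha ih =>
      rw [Finset.sum_insert ha, ih, ← indicatorConstLp_disjoint_union]
      · congr 1
        simp
      · rw [Set.disjoint_iUnion₂_right]
        intro i hi
        exact hd (fun h => ha (h ▸ hi))
  unfold HasSum
  simp_rw [hsum]
  refine tendsto_indicatorConstLp_set hP ?_
  have h1 : Tendsto (fun F : Finset ℕ => ∑ i ∈ F, μ (f i)) atTop (𝓝 (μ (⋃ i, f i))) := by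
    rw [measure_iUnion hd hf]
    exact ENNReal.summable.hasSum
  have h2 : Tendsto (fun F : Finset ℕ => μ (⋃ i, f i) - ∑ i ∈ F, μ (f i)) atTop (𝓝 0) := by
    have := ENNReal.Tendsto.sub (tendsto_const_nhds (x := μ (⋃ i, f i))) h1
      (Or.inl (measure_ne_top μ _))
    rwa [tsub_self] at this
  refine h2.congr fun F => ?_
  have hsub : (⋃ i ∈ F, f i) ⊆ ⋃ i, f i := Set.iUnion₂_subset_iUnion _ _
  rw [Set.symmDiff_def, Set.sdiff_eq_empty.2 hsub, Set.empty_union,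
    measure_sdiff hsub (hm F).nullMeasurableSet (measure_ne_top μ _),
    measure_biUnion_finset (fun i _ j _ hij => hd hij) (fun i _ => hf i)]

lemma aux_rn [IsFiniteMeasure μ] {P : ℝ≥0∞} [Fact (1 ≤ P)] (hP : P ≠ ⊤)
    (Λ : Lp ℂ P μ →L[ℝ] ℝ) : ∃ g : α → ℝ, Measurable g ∧ Integrable g μ ∧
      ∀ (s : Set α) (hs : MeasurableSet s),
      Λ (indicatorConstLp P hs (measure_ne_top μ s) (1:ℂ)) = ∫ x in s, g x ∂μ := by
  classical
  let ν : SignedMeasure α :=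
    { measureOf' := fun s => if hs : MeasurableSet s then
        Λ (indicatorConstLp P hs (measure_ne_top μ s) (1:ℂ)) else 0
      empty' := by
        rw [dif_pos MeasurableSet.empty, indicatorConstLp_empty, map_zero]
      not_measurable' := fun s hs => dif_neg hs
      m_iUnion' := by
        intro f hf hd
        rw [dif_pos (MeasurableSet.iUnion hf)]
        simp_rw [dif_pos (hf _)]
        exact (aux_hasSum hP f hf hd).mapL Λ }
  have hν : ∀ (s : Set α) (hs : MeasurableSet s), ν s =
      Λ (indicatorConstLp P hs (measure_ne_top μ s) (1:ℂ)) := fun s hs => dif_pos hs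
  have hac : ν ≪ᵥ μ.toENNRealVectorMeasure := by
    refine VectorMeasure.AbsolutelyContinuous.mk fun s hs h0 => ?_
    rw [Measure.toENNRealVectorMeasure_apply_measurable hs] at h0
    rw [hν s hs]
    have : indicatorConstLp P hs (measure_ne_top μ s) (1:ℂ) = 0 := by
      rw [← norm_eq_zero, norm_indicatorConstLp (zero_lt_one.trans_le Fact.out).ne' hP]
      have hp : 0 < P.toReal := ENNReal.toReal_pos (zero_lt_one.trans_le Fact.out).ne' hP
      rw [Measure.real, h0, ENNReal.toReal_zero, Real.zero_rpow (by positivity), mul_zero]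
    rw [this, map_zero]
  refine ⟨ν.rnDeriv μ, ν.measurable_rnDeriv μ, ν.integrable_rnDeriv μ, fun s hs => ?_⟩
  rw [← hν s hs]
  nth_rewrite 1 [← ν.withDensityᵥ_rnDeriv_eq μ hac]
  rw [withDensityᵥ_apply (ν.integrable_rnDeriv μ) hs]

lemma Lp_dual [IsFiniteMeasure μ] {p q : ℝ} (hpq : p.HolderConjugate q)
    [Fact (1 ≤ ENNReal.ofReal p)]
    (Λ : StrongDual ℂ (Lp ℂ (ENNReal.ofReal p) μ)) :
    ∃ g : α → ℂ, Measurable g ∧ eLpNorm g (ENNReal.ofReal q) μ ≤ ENNReal.ofReal ‖Λ‖ ∧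
      ∀ f : Lp ℂ (ENNReal.ofReal p) μ, Λ f = ∫ x, f x * g x ∂μ := by
  have hP : ENNReal.ofReal p ≠ ⊤ := ENNReal.ofReal_ne_top
  obtain ⟨g₁, hm1, hi1, h1⟩ := aux_rn hP (Complex.reCLM ∘L (Λ.restrictScalars ℝ))
  obtain ⟨g₂, hm2, hi2, h2⟩ := aux_rn hP (Complex.imCLM ∘L (Λ.restrictScalars ℝ))
  let g : α → ℂ := fun x => (g₁ x : ℂ) + (g₂ x : ℂ) * Complex.I
  have hgm : Measurable g := by
    have := Complex.measurable_ofReal.comp hm1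
    have h' := Complex.measurable_ofReal.comp hm2
    exact this.add (h'.mul_const _)
  have hgi : Integrable g μ := hi1.ofReal.add (hi2.ofReal.mul_const _)
  have hg : ∀ (s : Set α) (hs : MeasurableSet s),
      Λ (indicatorConstLp (ENNReal.ofReal p) hs (measure_ne_top μ s) (1:ℂ))
        = ∫ x in s, g x ∂μ := by
    intro s hs
    have e1 := h1 s hs
    have e2 := h2 s hs
    simp only [ContinuousLinearMap.comp_apply, ContinuousLinearMap.coe_restrictScalars',
      Complex.reCLM_apply, Complex.imCLM_apply] at e1 e2
    have : ∫ x in s, g x ∂μ = ((∫ x in s, g₁ x ∂μ : ℝ) : ℂ) +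
        ((∫ x in s, g₂ x ∂μ : ℝ) : ℂ) * Complex.I := by
      simp only [g]
      rw [integral_add hi1.ofReal.restrict (hi2.ofReal.mul_const _).restrict,
        integral_mul_const, integral_complex_ofReal, integral_complex_ofReal]
    rw [this, ← e1, ← e2, Complex.re_add_im]
  -- truncation
  let E : ℕ → Set α := fun n => {x | ‖g x‖ ≤ n}
  have hE : ∀ n, MeasurableSet (E n) := fun n => measurableSet_le hgm.norm measurable_const
  let G : ℕ → α → ℂ := fun n => (E n).indicator g
  have hGm : ∀ n, Measurable (G n) := fun n => hgm.indicator (hE n)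
  have hGL : ∀ n, MemLp (G n) (ENNReal.ofReal q) μ := by
    intro n
    refine MemLp.of_bound (hGm n).aestronglyMeasurable (n:ℝ) (ae_of_all _ fun x => ?_)
    simp only [G]
    by_cases hx : x ∈ E n
    · rw [Set.indicator_of_mem hx]; exact hx
    · rw [Set.indicator_of_notMem hx]; simp
  have hbd : ∀ n, eLpNorm (G n) (ENNReal.ofReal q) μ ≤ ENNReal.ofReal ‖Λ‖ := by
    intro n
    let Mn : Lp ℂ (ENNReal.ofReal p) μ →L[ℂ] Lp ℂ (ENNReal.ofReal p) μ :=
      (ContinuousLinearMap.mul ℂ ℂ).holderL μ ⊤ (ENNReal.ofReal p) (ENNReal.ofReal p)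
        (indicatorConstLp ⊤ (hE n) (measure_ne_top μ _) (1:ℂ))
    have hMn : ‖Mn‖ ≤ 1 := by
      refine ContinuousLinearMap.opNorm_le_bound _ zero_le_one fun f => ?_
      refine ((ContinuousLinearMap.mul ℂ ℂ).norm_holder_apply_apply_le _ _).trans ?_
      refine mul_le_mul_of_nonneg_right ?_ (norm_nonneg _)
      have a1 : ‖ContinuousLinearMap.mul ℂ ℂ‖ ≤ 1 := ContinuousLinearMap.opNorm_mul_le _ _
      have a2 : ‖indicatorConstLp ⊤ (hE n) (measure_ne_top μ _) (1:ℂ)‖ ≤ 1 := by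
        simpa using norm_indicatorConstLp_le (p := ⊤) (hs := hE n)
          (hμs := measure_ne_top μ _) (c := (1:ℂ))
      nlinarith [norm_nonneg (ContinuousLinearMap.mul ℂ ℂ),
        norm_nonneg (indicatorConstLp ⊤ (hE n) (measure_ne_top μ _) (1:ℂ))]
    have hΛ : ‖Λ ∘L Mn‖ ≤ ‖Λ‖ := by
      refine (ContinuousLinearMap.opNorm_comp_le _ _).trans ?_
      nlinarith [norm_nonneg Λ]
    refine le_trans ?_ (ENNReal.ofReal_le_ofReal hΛ)
    refine aux_norm hpq (Λ ∘L Mn) (hGm n) (hGL n) ?_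
    refine aux_ident hpq _ (hGL n) ?_
    intro s hs
    have : Mn (indicatorConstLp (ENNReal.ofReal p) hs (measure_ne_top μ s) (1:ℂ))
        = indicatorConstLp (ENNReal.ofReal p) (hs.inter (hE n)) (measure_ne_top μ _) (1:ℂ) := by
      ext1
      refine ((ContinuousLinearMap.mul ℂ ℂ).coeFn_holder _ _).trans ?_
      filter_upwards [indicatorConstLp_coeFn (p := ENNReal.ofReal p) (hs := hs)
        (hμs := measure_ne_top μ s) (c := (1:ℂ)), indicatorConstLp_coeFn (p := ENNReal.ofReal p)
        (hs := hs.inter (hE n))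
        (hμs := measure_ne_top μ _) (c := (1:ℂ)), indicatorConstLp_coeFn (p := ⊤) (hs := hE n)
        (hμs := measure_ne_top μ _) (c := (1:ℂ))] with x e1 e2 e3
      rw [e1, e2, e3]
      by_cases hx : x ∈ s <;> by_cases hy : x ∈ E n <;> simp [hx, hy]
    rw [ContinuousLinearMap.comp_apply, this, hg, ← setIntegral_indicator (hE n)]
  have hgN : eLpNorm g (ENNReal.ofReal q) μ ≤ ENNReal.ofReal ‖Λ‖ := by
    refine (Lp.eLpNorm_lim_le_liminf_eLpNorm (f := G)
      (fun n => (hGm n).aestronglyMeasurable) g (ae_of_all _ fun x => ?_)).trans ?_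
    · refine tendsto_const_nhds.congr' ?_
      filter_upwards [eventually_ge_atTop ⌈‖g x‖⌉₊] with n hn
      have : x ∈ E n := Nat.ceil_le.1 hn
      simp only [G]
      rw [Set.indicator_of_mem this]
    · refine liminf_le_of_le ?_ ?_
      · isBoundedDefault
      · intro b hb
        obtain ⟨n, hn⟩ := hb.exists
        exact hn.trans (hbd n)
  have hgL : MemLp g (ENNReal.ofReal q) μ :=
    ⟨hgm.aestronglyMeasurable, hgN.trans_lt ENNReal.ofReal_lt_top⟩
  exact ⟨g, hgm, hgN, aux_ident hpq Λ hgL hg⟩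
end LpDual

section Cubes
variable {d : ℕ}

lemma mem_cube_iff (α : Fin d → ℤ) (x : Fin d → ℝ) : x ∈ cube α ↔ (fun i => ⌊x i⌋) = α := by
  simp only [cube, Set.mem_pi, Set.mem_univ, true_implies, Set.mem_Ico, funext_iff,
    Int.floor_eq_iff]

lemma measurableSet_cube (α : Fin d → ℤ) : MeasurableSet (cube α) :=
  MeasurableSet.univ_pi fun _ => measurableSet_Ico

lemma disjoint_cube : Pairwise (Function.onFun Disjoint (cube (d := d))) := by
  intro α β h
  rw [Function.onFun, Set.disjoint_left]
  intro x hx hy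
  rw [mem_cube_iff] at hx hy
  exact h (hx.symm.trans hy)

lemma iUnion_cube : (⋃ α : Fin d → ℤ, cube α) = Set.univ := by
  ext x
  simp only [Set.mem_iUnion, Set.mem_univ, iff_true]
  exact ⟨_, (mem_cube_iff _ x).2 rfl⟩

lemma volume_cube (α : Fin d → ℤ) : volume (cube α) = 1 := by
  rw [cube, volume_pi_pi]
  simp

instance finite_cube (α : Fin d → ℤ) : IsFiniteMeasure (volume.restrict (cube α)) :=
  ⟨by simp [volume_cube]⟩

lemma lintegral_cubes (F : (Fin d → ℝ) → ℝ≥0∞) :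
    ∫⁻ x, F x = ∑' α : Fin d → ℤ, ∫⁻ x in cube α, F x := by
  rw [← lintegral_iUnion measurableSet_cube disjoint_cube, iUnion_cube, Measure.restrict_univ]

lemma glue (g : (Fin d → ℤ) → (Fin d → ℝ) → ℂ) (hg : ∀ α, Measurable (g α)) :
    ∃ G : (Fin d → ℝ) → ℂ, Measurable G ∧ ∀ α, ∀ x ∈ cube α, G x = g α x := by
  refine ⟨fun x => g (fun i => ⌊x i⌋) x, ?_, ?_⟩
  · have h1 : Measurable (fun z : (Fin d → ℤ) × (Fin d → ℝ) => g z.1 z.2) :=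
      measurable_from_prod_countable_right hg
    have h2 : Measurable (fun x : Fin d → ℝ => ((fun i => ⌊x i⌋ : Fin d → ℤ), x)) :=
      (measurable_pi_lambda _ fun i => Int.measurable_floor.comp (measurable_pi_apply i)).prodMk
        measurable_id
    exact h1.comp h2
  · intro α x hx
    rw [mem_cube_iff] at hx
    simp only [hx]

lemma holder_cube {p p' : ℝ} (hpp : p.HolderConjugate p') {ω : (Fin d → ℝ) → ℝ}
    (hω : Measurable ω) (hpos : ∀ x, 0 < ω x) {f φ : (Fin d → ℝ) → ℂ}
    (hf : Measurable f) (hφ : Measurable φ) (α : Fin d → ℤ) :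
    ∫⁻ x in cube α, ‖f x * φ x‖ₑ ≤
      eLpNorm (fun x => ω x • f x) (ENNReal.ofReal p) (volume.restrict (cube α)) *
      eLpNorm (fun x => (ω x)⁻¹ • φ x) (ENNReal.ofReal p') (volume.restrict (cube α)) := by
  have : ENNReal.HolderConjugate (ENNReal.ofReal p) (ENNReal.ofReal p') := hpp.ennrealOfReal
  have h := eLpNorm_smul_le_mul_eLpNorm (p := ENNReal.ofReal p) (q := ENNReal.ofReal p') (r := 1)
    (μ := volume.restrict (cube α)) (f := fun x => (ω x)⁻¹ • φ x) (φ := fun x => ω x • f x)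
    (hω.inv.smul hφ).aestronglyMeasurable (hω.smul hf).aestronglyMeasurable
  refine le_trans (le_of_eq ?_) h
  rw [eLpNorm_one_eq_lintegral_enorm]
  refine lintegral_congr fun x => ?_
  congr 1
  have := (hpos x).ne'
  simp only [Pi.smul_apply', smul_eq_mul, Complex.real_smul]
  have h' : (ω x : ℂ) ≠ 0 := by exact_mod_cast this
  push_cast
  field_simp

lemma holder_top {p p' : ℝ} (hpp : p.HolderConjugate p') {ω : (Fin d → ℝ) → ℝ}
    (hω : Measurable ω) (hpos : ∀ x, 0 < ω x) {f φ : (Fin d → ℝ) → ℂ}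
    (hf : Measurable f) (hφ : Measurable φ) :
    ∫⁻ x, ‖f x * φ x‖ₑ ≤ amalgamNorm p 1 ω f * amalgamNormTop p' (fun x => (ω x)⁻¹) φ := by
  rw [lintegral_cubes, amalgamNorm, div_one, ENNReal.rpow_one]
  simp_rw [ENNReal.rpow_one]
  rw [← ENNReal.tsum_mul_right]
  refine ENNReal.tsum_le_tsum fun α => (holder_cube hpp hω hpos hf hφ α).trans ?_
  gcongr
  exact le_iSup (fun α => eLpNorm (fun x => (ω x)⁻¹ • φ x) (ENNReal.ofReal p')
    (volume.restrict (cube α))) α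

lemma tsum_holder {ι : Type*} {r r' : ℝ} (h : r.HolderConjugate r') (a b : ι → ℝ≥0∞) :
    ∑' i, a i * b i ≤ (∑' i, a i ^ r) ^ (1 / r) * (∑' i, b i ^ r') ^ (1 / r') := by
  rw [ENNReal.tsum_eq_iSup_sum]
  refine iSup_le fun F => (ENNReal.inner_le_Lp_mul_Lq F a b h).trans ?_
  have := h.pos
  have := h.symm.pos
  gcongr <;> exact ENNReal.sum_le_tsum F

lemma holder_r {p p' r r' : ℝ} (hpp : p.HolderConjugate p') (hrr : r.HolderConjugate r')
    {ω : (Fin d → ℝ) → ℝ}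
    (hω : Measurable ω) (hpos : ∀ x, 0 < ω x) {f φ : (Fin d → ℝ) → ℂ}
    (hf : Measurable f) (hφ : Measurable φ) :
    ∫⁻ x, ‖f x * φ x‖ₑ ≤ amalgamNorm p r ω f * amalgamNorm p' r' (fun x => (ω x)⁻¹) φ := by
  rw [lintegral_cubes]
  refine (ENNReal.tsum_le_tsum fun α => holder_cube hpp hω hpos hf hφ α).trans ?_
  exact tsum_holder hrr _ _

end Cubes

section Scalars

lemma scalar_phase {q : ℝ} (hq : 1 < q) (z : ℂ) :
    ∃ a : ℂ, a * z = ((‖z‖ ^ q : ℝ) : ℂ) ∧ ‖a‖ = ‖z‖ ^ (q - 1) := by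
  rcases eq_or_ne z 0 with h0 | h0
  · refine ⟨0, ?_, ?_⟩
    · rw [h0, norm_zero, Real.zero_rpow (by linarith)]; simp
    · rw [h0, norm_zero, Real.zero_rpow (by linarith)]
  · have hz : 0 < ‖z‖ := norm_pos_iff.2 h0
    refine ⟨((‖z‖ ^ q : ℝ) : ℂ) / z, div_mul_cancel₀ _ h0, ?_⟩
    rw [norm_div, Complex.norm_real, Real.norm_eq_abs, abs_of_nonneg (by positivity),
      Real.rpow_sub_one hz.ne']

lemma lp_dual_norm {ι : Type*} [DecidableEq ι] {E : ι → Type*} [∀ i, NormedAddCommGroup (E i)]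
    [∀ i, NormedSpace ℂ (E i)] {r r' : ℝ} (h : r.HolderConjugate r') [Fact (1 ≤ ENNReal.ofReal r)]
    (L : StrongDual ℂ (lp E (ENNReal.ofReal r))) (F : Finset ι) :
    ∑ i ∈ F, (‖L ∘L lp.singleContinuousLinearMap ℂ E (ENNReal.ofReal r) i‖ / 2) ^ r'
      ≤ ‖L‖ ^ r' := by
  set Li : ∀ i, StrongDual ℂ (E i) :=
    fun i => L ∘L lp.singleContinuousLinearMap ℂ E (ENNReal.ofReal r) i with hLi
  have hr0 := h.pos
  have hr0' := h.symm.pos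
  have hx : ∀ i, ∃ x : E i, ‖x‖ ≤ 1 ∧ ‖Li i‖ / 2 ≤ ‖Li i x‖ := by
    intro i
    rcases (norm_nonneg (Li i)).eq_or_lt with h0 | h0
    · exact ⟨0, by simp, by rw [← h0]; simp⟩
    · obtain ⟨x, hx1, hx2⟩ := (Li i).exists_lt_apply_of_lt_opNorm (half_lt_self h0)
      exact ⟨x, hx1.le, hx2.le⟩
  choose x hx1 hx2 using hx
  choose a ha1 ha2 using fun i => scalar_phase h.symm.lt (Li i (x i))
  set S : ℝ := ∑ i ∈ F, ‖Li i (x i)‖ ^ r' with hS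
  have hS0 : 0 ≤ S := Finset.sum_nonneg fun i _ => by positivity
  refine le_trans (b := S) (Finset.sum_le_sum fun i _ => by gcongr; exact hx2 i) ?_
  let y : lp E (ENNReal.ofReal r) :=
    ∑ i ∈ F, lp.single (ENNReal.ofReal r) i (a i • x i)
  have hLy : L y = (S : ℂ) := by
    simp only [y, map_sum, hS, Complex.ofReal_sum]
    refine Finset.sum_congr rfl fun i _ => ?_
    rw [← ha1]
    have : L (lp.single (ENNReal.ofReal r) i (a i • x i)) = Li i (a i • x i) := rfl
    rw [this, map_smul, smul_eq_mul]
  have hy : ‖y‖ ^ r ≤ S := by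
    have hn := lp.norm_sum_single (p := ENNReal.ofReal r) (by
      rw [ENNReal.toReal_ofReal hr0.le]; exact hr0) (fun i => a i • x i) F
    rw [ENNReal.toReal_ofReal hr0.le] at hn
    rw [hn]
    refine Finset.sum_le_sum fun i _ => ?_
    have : ‖a i • x i‖ ≤ ‖Li i (x i)‖ ^ (r' - 1) := by
      rw [norm_smul, ha2]
      exact mul_le_of_le_one_right (by positivity) (hx1 i)
    calc ‖a i • x i‖ ^ r ≤ (‖Li i (x i)‖ ^ (r' - 1)) ^ r := by gcongr
      _ = ‖Li i (x i)‖ ^ r' := by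
        rw [← Real.rpow_mul (norm_nonneg _), h.symm.sub_one_mul_conj]
  have hy' : ‖y‖ ≤ S ^ (1 / r) := by
    rw [one_div]
    exact (Real.le_rpow_inv_iff_of_pos (norm_nonneg _) hS0 hr0).2 hy
  have hmain : S ≤ ‖L‖ * S ^ (1 / r) := by
    have := L.le_opNorm y
    rw [hLy, Complex.norm_real, Real.norm_eq_abs, abs_of_nonneg hS0] at this
    exact this.trans (by gcongr)
  rcases hS0.eq_or_lt with h0 | h0
  · rw [← h0]; positivity
  · have hs : S = S ^ (1 / r') * S ^ (1 / r) := by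
      rw [← Real.rpow_add h0]
      have : 1 / r' + 1 / r = 1 := by
        have := h.symm.inv_add_inv_eq_one; simpa using this
      rw [this, Real.rpow_one]
    have hp : 0 < S ^ (1 / r) := by positivity
    have : S ^ (1 / r') ≤ ‖L‖ := by
      refine le_of_mul_le_mul_right ?_ hp
      rw [← hs]; exact hmain
    rw [one_div] at this
    exact (Real.rpow_inv_le_iff_of_pos hS0 (norm_nonneg _) hr0').1 this
end Scalars

section Amalgam
variable {d : ℕ}

/-- The amalgam space as an `ℓ^s`-sum of `L^p` spaces of the unit cubes. -/
noncomputable abbrev Am (d : ℕ) (p s : ℝ) [Fact (1 ≤ ENNReal.ofReal p)] :=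
  lp (fun α : Fin d → ℤ => Lp ℂ (ENNReal.ofReal p) ((volume : Measure (Fin d → ℝ)).restrict (cube α)))
    (ENNReal.ofReal s)

/-- `y` represents the weighted function `ω f`. -/
def AmRep (p s : ℝ) [Fact (1 ≤ ENNReal.ofReal p)] (ω : (Fin d → ℝ) → ℝ) (f : (Fin d → ℝ) → ℂ) (y : Am d p s) : Prop :=
  ∀ α, (y α : (Fin d → ℝ) → ℂ) =ᵐ[volume.restrict (cube α)] fun x => ω x • f x

lemma AmRep.norm {p s : ℝ} [Fact (1 ≤ ENNReal.ofReal p)] (hs : 0 < s) {ω : (Fin d → ℝ) → ℝ} {f : (Fin d → ℝ) → ℂ} {y : Am d p s}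
    (h : AmRep p s ω f y) : amalgamNorm p s ω f = ENNReal.ofReal ‖y‖ := by
  have hs' : (ENNReal.ofReal s).toReal = s := ENNReal.toReal_ofReal hs.le
  have hsum := (lp.memℓp y).summable (by rw [hs']; exact hs)
  rw [lp.norm_eq_tsum_rpow (by rw [hs']; exact hs)]
  rw [hs'] at hsum ⊢
  have hn : 0 ≤ ∑' i, ‖y i‖ ^ s := tsum_nonneg fun i => by positivity
  rw [← ENNReal.ofReal_rpow_of_nonneg hn (by positivity),
    ENNReal.ofReal_tsum_of_nonneg (fun i => by positivity) hsum, amalgamNorm]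
  congr 2
  ext α
  rw [← ENNReal.ofReal_rpow_of_nonneg (norm_nonneg _) hs.le, Lp.norm_def,
    ENNReal.ofReal_toReal (Lp.eLpNorm_ne_top _), eLpNorm_congr_ae (h α)]

lemma exists_rep {p s : ℝ} [Fact (1 ≤ ENNReal.ofReal p)] (hs : 0 < s) {ω : (Fin d → ℝ) → ℝ} (hω : Measurable ω)
    {f : (Fin d → ℝ) → ℂ} (h : MemAmalgam p s ω f) : ∃ y : Am d p s, AmRep p s ω f y := by
  have hs' : (ENNReal.ofReal s).toReal = s := ENNReal.toReal_ofReal hs.le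
  have ht : ∑' α : Fin d → ℤ,
      (eLpNorm (fun x => ω x • f x) (ENNReal.ofReal p) (volume.restrict (cube α))) ^ s ≠ ⊤ := by
    intro hh
    have := h.2
    rw [amalgamNorm, hh, ENNReal.top_rpow_of_pos (by positivity)] at this
    exact lt_irrefl _ this
  have hα : ∀ α : Fin d → ℤ, MemLp (fun x => ω x • f x) (ENNReal.ofReal p)
      (volume.restrict (cube α)) := by
    intro α
    refine ⟨(hω.smul h.1).aestronglyMeasurable, ?_⟩
    by_contra hc
    rw [not_lt, top_le_iff] at hc
    have := ENNReal.ne_top_of_tsum_ne_top ht α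
    rw [hc, ENNReal.top_rpow_of_pos hs] at this
    exact this rfl
  have hmem : Memℓp (fun α => (hα α).toLp _) (ENNReal.ofReal s) := by
    refine memℓp_gen ?_
    rw [hs']
    have := ENNReal.summable_toReal ht
    refine this.congr fun α => ?_
    rw [Lp.norm_toLp, ENNReal.toReal_rpow]
  exact ⟨⟨_, hmem⟩, fun α => (hα α).coeFn_toLp⟩

lemma AmRep.add {p s : ℝ} [Fact (1 ≤ ENNReal.ofReal p)] {ω : (Fin d → ℝ) → ℝ} {f g : (Fin d → ℝ) → ℂ} {y z : Am d p s}
    (h : AmRep p s ω f y) (h' : AmRep p s ω g z) : AmRep p s ω (fun x => f x + g x) (y + z) := by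
  intro α
  rw [lp.coeFn_add, Pi.add_apply]
  filter_upwards [Lp.coeFn_add (y α) (z α), h α, h' α] with x h1 h2 h3
  rw [h1, Pi.add_apply, h2, h3, smul_add]

lemma AmRep.smul {p s : ℝ} [Fact (1 ≤ ENNReal.ofReal p)] {ω : (Fin d → ℝ) → ℝ} {f : (Fin d → ℝ) → ℂ} {y : Am d p s} (a : ℂ)
    (h : AmRep p s ω f y) : AmRep p s ω (fun x => a * f x) (a • y) := by
  intro α
  rw [lp.coeFn_smul, Pi.smul_apply]
  filter_upwards [Lp.coeFn_smul a (y α), h α] with x h1 h2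
  rw [h1, Pi.smul_apply, h2]
  simp only [smul_eq_mul, Complex.real_smul]
  ring

lemma AmRep.memAmalgam {p s : ℝ} [Fact (1 ≤ ENNReal.ofReal p)] (hs : 0 < s) {ω : (Fin d → ℝ) → ℝ} {f : (Fin d → ℝ) → ℂ}
    {y : Am d p s} (h : AmRep p s ω f y) (hf : Measurable f) : MemAmalgam p s ω f :=
  ⟨hf, by rw [h.norm hs]; exact ENNReal.ofReal_lt_top⟩

lemma amalgam_dual {p p' s : ℝ} (hpp : p.HolderConjugate p') [Fact (1 ≤ ENNReal.ofReal p)]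
    [Fact (1 ≤ ENNReal.ofReal s)] (L : StrongDual ℂ (Am d p s)) :
    ∃ G : (Fin d → ℝ) → ℂ, Measurable G ∧
      (∀ α, eLpNorm G (ENNReal.ofReal p') (volume.restrict (cube α)) ≤
        ENNReal.ofReal ‖L ∘L lp.singleContinuousLinearMap ℂ _ (ENNReal.ofReal s) α‖) ∧
      ∀ y : Am d p s, HasSum (fun α => ∫ x in cube α, y α x * G x) (L y) := by
  choose g hg1 hg2 hg3 using fun α : Fin d → ℤ => Lp_dual hpp
    (L ∘L lp.singleContinuousLinearMap ℂ (fun α : Fin d → ℤ => Lp ℂ (ENNReal.ofReal p)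
      ((volume : Measure (Fin d → ℝ)).restrict (cube α))) (ENNReal.ofReal s) α)
  obtain ⟨G, hGm, hG⟩ := glue g hg1
  have hae : ∀ α, G =ᵐ[volume.restrict (cube α)] g α := fun α => by
    filter_upwards [ae_restrict_mem (measurableSet_cube α)] with x hx using hG α x hx
  refine ⟨G, hGm, fun α => ?_, fun y => ?_⟩
  · rw [eLpNorm_congr_ae (hae α)]
    exact hg2 α
  · have h1 := (lp.hasSum_single ENNReal.ofReal_ne_top y).mapL L
    refine h1.congr_fun ?_
    intro α
    have h2 := hg3 α (y α)
    refine Eq.trans ?_ h2.symm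
    refine integral_congr_ae ?_
    filter_upwards [hae α] with x hx
    rw [hx]

lemma rep_pairing {p s : ℝ} [Fact (1 ≤ ENNReal.ofReal p)] {ω : (Fin d → ℝ) → ℝ}
    {f G : (Fin d → ℝ) → ℂ} {y : Am d p s} (h : AmRep p s ω f y)
    (hi : Integrable (fun x => f x * (ω x • G x))) {c : ℂ}
    (hL : HasSum (fun α => ∫ x in cube α, y α x * G x) c) :
    c = ∫ x, f x * (ω x • G x) := by
  have h1 := hasSum_integral_iUnion measurableSet_cube disjoint_cube
    (f := fun x => f x * (ω x • G x)) (μ := (volume : Measure (Fin d → ℝ))) hi.integrableOn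
  rw [iUnion_cube, setIntegral_univ] at h1
  refine (hL.congr_fun fun α => ?_).unique h1
  refine integral_congr_ae ?_
  filter_upwards [h α] with x hx
  rw [hx]
  simp only [Complex.real_smul]
  ring

lemma integrable_of_amalgam {p p' : ℝ} (hpp : p.HolderConjugate p') {ω : (Fin d → ℝ) → ℝ}
    (hω : Measurable ω) (h1 : ∀ x, 1 ≤ ω x) {f : (Fin d → ℝ) → ℂ} (hf : MemAmalgam p 1 ω f) :
    Integrable f := by
  refine ⟨hf.1.aestronglyMeasurable, ?_⟩
  have h := holder_top hpp hω (fun x => zero_lt_one.trans_le (h1 x)) hf.1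
    (measurable_const (a := (1:ℂ)))
  simp only [mul_one] at h
  refine h.trans_lt (ENNReal.mul_lt_top hf.2 ?_)
  refine lt_of_le_of_lt (b := 1) (iSup_le fun α => ?_) ENNReal.one_lt_top
  refine (eLpNorm_le_of_ae_bound (C := 1) (ae_of_all _ fun x => ?_)).trans ?_
  · have := h1 x
    rw [norm_smul, norm_one, mul_one, Real.norm_eq_abs, abs_of_nonneg (by positivity)]
    exact inv_le_one_of_one_le₀ this
  · simp [volume_cube]

lemma fourierT_add {f g : (Fin d → ℝ) → ℂ} (hf : Integrable f) (hg : Integrable g) :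
    fourierT (fun x => f x + g x) = fun ξ => fourierT f ξ + fourierT g ξ := by
  have key : ∀ {h : (Fin d → ℝ) → ℂ} (_ : Integrable h) (ξ : Fin d → ℝ),
      Integrable fun x : Fin d → ℝ =>
        Complex.exp (-(2 * (Real.pi : ℂ) * Complex.I * ∑ i, (x i : ℂ) * (ξ i : ℂ))) * h x := by
    intro h hh ξ
    refine hh.bdd_mul (c := 1) (Continuous.aestronglyMeasurable (by fun_prop))
      (ae_of_all _ fun x => le_of_eq ?_)
    rw [Complex.norm_exp]
    have : (-(2 * (Real.pi : ℂ) * Complex.I * ∑ i, (x i : ℂ) * (ξ i : ℂ)))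
        = ((-(2 * Real.pi * ∑ i, x i * ξ i) : ℝ) : ℂ) * Complex.I := by
      push_cast; ring
    rw [this, Complex.re_ofReal_mul, Complex.I_re, mul_zero, Real.exp_zero]
  ext ξ
  simp only [fourierT]
  rw [← integral_add (key hf ξ) (key hg ξ)]
  refine integral_congr_ae (ae_of_all _ fun x => ?_)
  ring

lemma fourierT_smul (a : ℂ) (f : (Fin d → ℝ) → ℂ) :
    fourierT (fun x => a * f x) = fun ξ => a * fourierT f ξ := by
  ext ξ
  simp only [fourierT]
  rw [← integral_const_mul]
  refine integral_congr_ae (ae_of_all _ fun x => ?_)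
  ring
end Amalgam

section Final
variable {d : ℕ}

lemma inv_smul_smul_fun {ω : (Fin d → ℝ) → ℝ} (hpos : ∀ x, 0 < ω x) (G : (Fin d → ℝ) → ℂ) :
    (fun x => (ω x)⁻¹ • (ω x • G x)) = G := by
  ext x
  exact inv_smul_smul₀ (hpos x).ne' _

lemma normTop_le {p p' : ℝ} [Fact (1 ≤ ENNReal.ofReal p)]
    [Fact (1 ≤ ENNReal.ofReal 1)] {ω : (Fin d → ℝ) → ℝ} (hpos : ∀ x, 0 < ω x)
    (L : StrongDual ℂ (Am d p 1)) {G : (Fin d → ℝ) → ℂ}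
    (hG : ∀ α, eLpNorm G (ENNReal.ofReal p') (volume.restrict (cube α)) ≤
        ENNReal.ofReal ‖L ∘L lp.singleContinuousLinearMap ℂ _ (ENNReal.ofReal 1) α‖) :
    amalgamNormTop p' (fun x => (ω x)⁻¹) (fun x => ω x • G x) ≤ ENNReal.ofReal ‖L‖ := by
  rw [amalgamNormTop]
  simp only [inv_smul_smul_fun hpos]
  refine iSup_le fun α => (hG α).trans (ENNReal.ofReal_le_ofReal ?_)
  refine ContinuousLinearMap.opNorm_le_bound _ (norm_nonneg _) fun x => ?_
  refine (L.le_opNorm _).trans (le_of_eq ?_)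
  congr 1
  exact lp.norm_single (E := fun α : Fin d → ℤ => Lp ℂ (ENNReal.ofReal p)
      ((volume : Measure (Fin d → ℝ)).restrict (cube α))) (p := ENNReal.ofReal 1) (by simp) α x

lemma normR_le {p p' r r' : ℝ} (hrr : r.HolderConjugate r') [Fact (1 ≤ ENNReal.ofReal p)]
    [Fact (1 ≤ ENNReal.ofReal r)] {ω : (Fin d → ℝ) → ℝ} (hpos : ∀ x, 0 < ω x)
    (L : StrongDual ℂ (Am d p r)) {G : (Fin d → ℝ) → ℂ}
    (hG : ∀ α, eLpNorm G (ENNReal.ofReal p') (volume.restrict (cube α)) ≤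
        ENNReal.ofReal ‖L ∘L lp.singleContinuousLinearMap ℂ _ (ENNReal.ofReal r) α‖) :
    amalgamNorm p' r' (fun x => (ω x)⁻¹) (fun x => ω x • G x) ≤ ENNReal.ofReal (2 * ‖L‖) := by
  have hr0 := hrr.symm.pos
  rw [amalgamNorm]
  simp only [inv_smul_smul_fun hpos]
  rw [one_div, ENNReal.rpow_inv_le_iff hr0, ENNReal.tsum_eq_iSup_sum]
  refine iSup_le fun F => ?_
  have h1 := lp_dual_norm hrr L F
  calc _ ≤ ∑ α ∈ F, ENNReal.ofReal
          ((2:ℝ) ^ r' * (‖L ∘L lp.singleContinuousLinearMap ℂ _ (ENNReal.ofReal r) α‖ / 2) ^ r') := by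
        refine Finset.sum_le_sum fun α _ => ?_
        rw [← Real.mul_rpow (by norm_num) (by positivity),
          ← ENNReal.ofReal_rpow_of_nonneg (by positivity) hr0.le]
        refine ENNReal.rpow_le_rpow ((hG α).trans_eq ?_) hr0.le
        congr 1
        ring
    _ ≤ _ := by
        rw [← ENNReal.ofReal_sum_of_nonneg (fun i _ => by positivity), ← Finset.mul_sum,
          ENNReal.ofReal_rpow_of_nonneg (by positivity) hr0.le]
        refine ENNReal.ofReal_le_ofReal ?_
        rw [Real.mul_rpow (by norm_num) (by positivity)]
        gcongr

/-- The image of `A` inside the product of the two amalgam spaces. -/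
def ASub {p p' q r : ℝ} [Fact (1 ≤ ENNReal.ofReal p)] [Fact (1 ≤ ENNReal.ofReal q)]
    [Fact (1 ≤ ENNReal.ofReal 1)] [Fact (1 ≤ ENNReal.ofReal r)]
    (hpp : p.HolderConjugate p') (hr : 0 < r)
    {ϑ₁ ϑ₂ : (Fin d → ℝ) → ℝ} (h1 : IsBeurling ϑ₁) :
    Submodule ℂ (Am d p 1 × Am d q r) where
  carrier := {y | ∃ f, MemA p q r ϑ₁ ϑ₂ f ∧ AmRep p 1 ϑ₁ f y.1 ∧ AmRep q r ϑ₂ (fourierT f) y.2}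
  add_mem' := by
    rintro y z ⟨f, hf, hf1, hf2⟩ ⟨g, hg, hg1, hg2⟩
    have hF := fourierT_add (integrable_of_amalgam hpp h1.1 h1.2.1 hf.1)
      (integrable_of_amalgam hpp h1.1 h1.2.1 hg.1)
    have ha := hf1.add hg1
    have hb := hf2.add hg2
    rw [← hF] at hb
    exact ⟨_, ⟨ha.memAmalgam one_pos (hf.1.1.add hg.1.1),
      hb.memAmalgam hr (by rw [hF]; exact hf.2.1.add hg.2.1)⟩, ha, hb⟩
  smul_mem' := by
    rintro a y ⟨f, hf, hf1, hf2⟩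
    have hF := fourierT_smul a f
    have ha := hf1.smul a
    have hb := hf2.smul a
    rw [← hF] at hb
    exact ⟨_, ⟨ha.memAmalgam one_pos (hf.1.1.const_mul a),
      hb.memAmalgam hr (by rw [hF]; exact hf.2.1.const_mul a)⟩, ha, hb⟩
  zero_mem' := by
    have hF : fourierT (fun _ : Fin d → ℝ => (0:ℂ)) = fun _ => 0 := by
      ext ξ; simp [fourierT]
    have ha : AmRep p 1 ϑ₁ (fun _ => (0:ℂ)) (0 : Am d p 1) := fun α => by
      filter_upwards [Lp.coeFn_zero ℂ (ENNReal.ofReal p) (volume.restrict (cube α))] with x hx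
      rw [smul_zero]; exact hx
    have hb : AmRep q r ϑ₂ (fourierT (fun _ : Fin d → ℝ => (0:ℂ))) (0 : Am d q r) := fun α => by
      rw [hF]
      filter_upwards [Lp.coeFn_zero ℂ (ENNReal.ofReal q) (volume.restrict (cube α))] with x hx
      rw [smul_zero]; exact hx
    exact ⟨_, ⟨ha.memAmalgam one_pos measurable_const,
      hb.memAmalgam hr (by rw [hF]; exact measurable_const)⟩, ha, hb⟩

lemma pair_bound {p q r p' q' r' : ℝ} (hpp : p.HolderConjugate p') (hqq : q.HolderConjugate q')
    (hrr : r.HolderConjugate r') {ϑ₁ ϑ₂ : (Fin d → ℝ) → ℝ} (h1 : IsBeurling ϑ₁)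
    (h2 : IsBeurling ϑ₂) {φ ψ f : (Fin d → ℝ) → ℂ} (hφ : Measurable φ) (hψ : Measurable ψ)
    (hf : MemA p q r ϑ₁ ϑ₂ f) :
    ‖pairA φ ψ f‖ₑ ≤ (amalgamNormTop p' (fun x => (ϑ₁ x)⁻¹) φ +
              amalgamNorm q' r' (fun x => (ϑ₂ x)⁻¹) ψ) * ANorm p q r ϑ₁ ϑ₂ f := by
  have a1 := holder_top hpp h1.1 (fun x => zero_lt_one.trans_le (h1.2.1 x)) hf.1.1 hφ
  have a2 := holder_r hqq hrr h2.1 (fun x => zero_lt_one.trans_le (h2.2.1 x)) hf.2.1 hψ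
  calc ‖pairA φ ψ f‖ₑ ≤ _ := enorm_add_le _ _
    _ ≤ _ := add_le_add (enorm_integral_le_lintegral_enorm _) (enorm_integral_le_lintegral_enorm _)
    _ ≤ _ := add_le_add a1 a2
    _ ≤ _ := by
      rw [ANorm, mul_comm _ (amalgamNormTop _ _ _), mul_comm _ (amalgamNorm q' _ _ _), add_mul,
        mul_add, mul_add]
      exact add_le_add le_self_add le_add_self

set_option maxHeartbeats 2000000 in
lemma surj {p q r p' q' r' : ℝ} (hpp : p.HolderConjugate p') (hqq : q.HolderConjugate q')
    (hrr : r.HolderConjugate r') {ϑ₁ ϑ₂ : (Fin d → ℝ) → ℝ} (h1 : IsBeurling ϑ₁)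
    (h2 : IsBeurling ϑ₂) (T : ((Fin d → ℝ) → ℂ) → ℂ)
    (hTa : ∀ f g : (Fin d → ℝ) → ℂ, MemA p q r ϑ₁ ϑ₂ f → MemA p q r ϑ₁ ϑ₂ g →
          T (fun x => f x + g x) = T f + T g)
    (hTs : ∀ (a : ℂ) (f : (Fin d → ℝ) → ℂ), MemA p q r ϑ₁ ϑ₂ f →
          T (fun x => a * f x) = a * T f)
    (M : ℝ) (hM : 0 ≤ M)
    (hTb : ∀ f : (Fin d → ℝ) → ℂ, MemA p q r ϑ₁ ϑ₂ f →
          (‖T f‖₊ : ℝ≥0∞) ≤ ENNReal.ofReal M * ANorm p q r ϑ₁ ϑ₂ f) :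
        ∃ φ ψ : (Fin d → ℝ) → ℂ,
          MemAmalgamTop p' (fun x => (ϑ₁ x)⁻¹) φ ∧
          MemAmalgam q' r' (fun x => (ϑ₂ x)⁻¹) ψ ∧
          (∀ f : (Fin d → ℝ) → ℂ, MemA p q r ϑ₁ ϑ₂ f → T f = pairA φ ψ f) ∧
          amalgamNormTop p' (fun x => (ϑ₁ x)⁻¹) φ +
            amalgamNorm q' r' (fun x => (ϑ₂ x)⁻¹) ψ ≤ ENNReal.ofReal (6 * M) := by
  have : Fact (1 ≤ ENNReal.ofReal p) := ⟨by rw [ENNReal.one_le_ofReal]; exact hpp.lt.le⟩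
  have : Fact (1 ≤ ENNReal.ofReal q) := ⟨by rw [ENNReal.one_le_ofReal]; exact hqq.lt.le⟩
  have : Fact (1 ≤ ENNReal.ofReal r) := ⟨by rw [ENNReal.one_le_ofReal]; exact hrr.lt.le⟩
  have : Fact (1 ≤ ENNReal.ofReal 1) := ⟨by simp⟩
  have hr0 := hrr.pos
  have pos1 : ∀ x, 0 < ϑ₁ x := fun x => zero_lt_one.trans_le (h1.2.1 x)
  have pos2 : ∀ x, 0 < ϑ₂ x := fun x => zero_lt_one.trans_le (h2.2.1 x)
  let S : Submodule ℂ (Am d p 1 × Am d q r) := ASub hpp hr0 (ϑ₂ := ϑ₂) h1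
  have hbd : ∀ (f : (Fin d → ℝ) → ℂ) (y : Am d p 1 × Am d q r), MemA p q r ϑ₁ ϑ₂ f →
      AmRep p 1 ϑ₁ f y.1 → AmRep q r ϑ₂ (fourierT f) y.2 → ‖T f‖ ≤ M * (‖y.1‖ + ‖y.2‖) := by
    intro f y hf hf1 hf2
    have := hTb f hf
    rw [ANorm, hf1.norm one_pos, hf2.norm hr0, ← ENNReal.ofReal_add (norm_nonneg _) (norm_nonneg _),
      ← ENNReal.ofReal_mul hM, ← enorm_eq_nnnorm, ← ofReal_norm] at this
    exact (ENNReal.ofReal_le_ofReal_iff (by positivity)).1 this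
  have hadd : ∀ (f g : (Fin d → ℝ) → ℂ) (y z : Am d p 1 × Am d q r), MemA p q r ϑ₁ ϑ₂ f →
      AmRep p 1 ϑ₁ f y.1 → AmRep q r ϑ₂ (fourierT f) y.2 → MemA p q r ϑ₁ ϑ₂ g →
      AmRep p 1 ϑ₁ g z.1 → AmRep q r ϑ₂ (fourierT g) z.2 →
      MemA p q r ϑ₁ ϑ₂ (fun x => f x + g x) ∧ AmRep p 1 ϑ₁ (fun x => f x + g x) (y + z).1 ∧
        AmRep q r ϑ₂ (fourierT (fun x => f x + g x)) (y + z).2 := by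
    intro f g y z hf hf1 hf2 hg hg1 hg2
    have hF := fourierT_add (integrable_of_amalgam hpp h1.1 h1.2.1 hf.1)
      (integrable_of_amalgam hpp h1.1 h1.2.1 hg.1)
    have ha := hf1.add hg1
    have hb := hf2.add hg2
    rw [← hF] at hb
    exact ⟨⟨ha.memAmalgam one_pos (hf.1.1.add hg.1.1),
      hb.memAmalgam hr0 (by rw [hF]; exact hf.2.1.add hg.2.1)⟩, ha, hb⟩
  have hsmul : ∀ (a : ℂ) (f : (Fin d → ℝ) → ℂ) (y : Am d p 1 × Am d q r), MemA p q r ϑ₁ ϑ₂ f →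
      AmRep p 1 ϑ₁ f y.1 → AmRep q r ϑ₂ (fourierT f) y.2 →
      MemA p q r ϑ₁ ϑ₂ (fun x => a * f x) ∧ AmRep p 1 ϑ₁ (fun x => a * f x) (a • y).1 ∧
        AmRep q r ϑ₂ (fourierT (fun x => a * f x)) (a • y).2 := by
    intro a f y hf hf1 hf2
    have hF := fourierT_smul a f
    have ha := hf1.smul a
    have hb := hf2.smul a
    rw [← hF] at hb
    exact ⟨⟨ha.memAmalgam one_pos (hf.1.1.const_mul a),
      hb.memAmalgam hr0 (by rw [hF]; exact hf.2.1.const_mul a)⟩, ha, hb⟩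
  have hwd : ∀ (f g : (Fin d → ℝ) → ℂ) (y : Am d p 1 × Am d q r), MemA p q r ϑ₁ ϑ₂ f →
      AmRep p 1 ϑ₁ f y.1 → AmRep q r ϑ₂ (fourierT f) y.2 → MemA p q r ϑ₁ ϑ₂ g →
      AmRep p 1 ϑ₁ g y.1 → AmRep q r ϑ₂ (fourierT g) y.2 → T f = T g := by
    intro f g y hf hf1 hf2 hg hg1 hg2
    obtain ⟨k, k1, k2⟩ := hsmul (-1) g y hg hg1 hg2
    obtain ⟨l, l1, l2⟩ := hadd f _ y _ hf hf1 hf2 k k1 k2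
    have := hbd _ _ l l1 l2
    rw [hTa _ _ hf k, hTs _ _ hg] at this
    have e : y + (-1 : ℂ) • y = 0 := by rw [neg_one_smul, add_neg_cancel]
    rw [e] at this
    simp only [Prod.fst_zero, Prod.snd_zero, norm_zero, add_zero, mul_zero] at this
    have := norm_le_zero_iff.1 this
    linear_combination this
  have hS : ∀ y : S, ∃ f, MemA p q r ϑ₁ ϑ₂ f ∧ AmRep p 1 ϑ₁ f y.1.1 ∧
      AmRep q r ϑ₂ (fourierT f) y.1.2 := fun y => y.2
  choose F hF0 hF1 hF2 using hS
  let T0 : S →ₗ[ℂ] ℂ :=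
    { toFun := fun y => T (F y)
      map_add' := fun y z => by
        obtain ⟨l, l1, l2⟩ := hadd _ _ y.1 z.1 (hF0 y) (hF1 y) (hF2 y) (hF0 z) (hF1 z) (hF2 z)
        rw [← hTa _ _ (hF0 y) (hF0 z)]
        exact hwd _ _ (y + z).1 (hF0 _) (hF1 _) (hF2 _) l l1 l2
      map_smul' := fun a y => by
        obtain ⟨l, l1, l2⟩ := hsmul a _ y.1 (hF0 y) (hF1 y) (hF2 y)
        rw [RingHom.id_apply, smul_eq_mul, ← hTs _ _ (hF0 y)]
        exact hwd _ _ (a • y).1 (hF0 _) (hF1 _) (hF2 _) l l1 l2 }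
  have hT0 : ∀ y : S, ‖T0 y‖ ≤ (2 * M) * ‖y‖ := fun y => by
    refine (hbd _ _ (hF0 y) (hF1 y) (hF2 y)).trans ?_
    have e1 : ‖y.1.1‖ ≤ ‖y‖ := norm_fst_le y.1
    have e2 : ‖y.1.2‖ ≤ ‖y‖ := norm_snd_le y.1
    calc _ ≤ M * (‖y‖ + ‖y‖) := by gcongr
      _ = _ := by ring
  obtain ⟨g, hg, hgn⟩ := exists_extension_norm_eq S (T0.mkContinuous (2 * M) hT0)
  have hgM : ‖g‖ ≤ 2 * M := by
    rw [hgn]; exact T0.mkContinuous_norm_le (by positivity) hT0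
  let L1 : StrongDual ℂ (Am d p 1) := g ∘L ContinuousLinearMap.inl ℂ _ _
  let L2 : StrongDual ℂ (Am d q r) := g ∘L ContinuousLinearMap.inr ℂ _ _
  have hL1 : ‖L1‖ ≤ 2 * M := by
    refine le_trans (ContinuousLinearMap.opNorm_le_bound _ (norm_nonneg _) fun x => ?_) hgM
    refine (g.le_opNorm _).trans (le_of_eq ?_)
    simp [Prod.norm_def]
  have hL2 : ‖L2‖ ≤ 2 * M := by
    refine le_trans (ContinuousLinearMap.opNorm_le_bound _ (norm_nonneg _) fun x => ?_) hgM
    refine (g.le_opNorm _).trans (le_of_eq ?_)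
    simp [Prod.norm_def]
  obtain ⟨G1, hm1, hn1, hs1⟩ := amalgam_dual hpp L1
  obtain ⟨G2, hm2, hn2, hs2⟩ := amalgam_dual hqq L2
  have N1 := (normTop_le pos1 L1 hn1).trans (ENNReal.ofReal_le_ofReal hL1)
  have N2 := (normR_le hrr pos2 L2 hn2).trans (ENNReal.ofReal_le_ofReal
    (mul_le_mul_of_nonneg_left hL2 zero_le_two))
  have mφ : Measurable fun x => ϑ₁ x • G1 x := h1.1.smul hm1
  have mψ : Measurable fun x => ϑ₂ x • G2 x := h2.1.smul hm2
  refine ⟨fun x => ϑ₁ x • G1 x, fun x => ϑ₂ x • G2 x, ⟨mφ, N1.trans_lt ENNReal.ofReal_lt_top⟩,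
    ⟨mψ, N2.trans_lt ENNReal.ofReal_lt_top⟩, ?_, ?_⟩
  · intro f hf
    obtain ⟨y1, hy1⟩ := exists_rep one_pos h1.1 hf.1
    obtain ⟨y2, hy2⟩ := exists_rep hr0 h2.1 hf.2
    have i1 : Integrable fun x => f x * (ϑ₁ x • G1 x) :=
      ⟨(hf.1.1.mul mφ).aestronglyMeasurable, (holder_top hpp h1.1 pos1 hf.1.1 mφ).trans_lt
        (ENNReal.mul_lt_top hf.1.2 (N1.trans_lt ENNReal.ofReal_lt_top))⟩
    have i2 : Integrable fun x => fourierT f x * (ϑ₂ x • G2 x) :=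
      ⟨(hf.2.1.mul mψ).aestronglyMeasurable, (holder_r hqq hrr h2.1 pos2 hf.2.1 mψ).trans_lt
        (ENNReal.mul_lt_top hf.2.2 (N2.trans_lt ENNReal.ofReal_lt_top))⟩
    have p1 := rep_pairing hy1 i1 (hs1 y1)
    have p2 := rep_pairing hy2 i2 (hs2 y2)
    have hmem : (y1, y2) ∈ S := ⟨f, hf, hy1, hy2⟩
    have e0 : g (y1, y2) = T f := by
      have := hg ⟨(y1, y2), hmem⟩
      refine this.trans ?_
      exact hwd _ _ (y1, y2) (hF0 ⟨(y1, y2), hmem⟩) (hF1 ⟨(y1, y2), hmem⟩)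
        (hF2 ⟨(y1, y2), hmem⟩) hf hy1 hy2
    rw [pairA, ← p1, ← p2, ← e0]
    change g (y1, y2) = g (y1, 0) + g (0, y2)
    rw [← map_add, Prod.mk_add_mk, add_zero, zero_add]
  · refine (add_le_add N1 N2).trans ?_
    rw [← ENNReal.ofReal_add (by positivity) (by positivity)]
    refine ENNReal.ofReal_le_ofReal (by linarith)
end Final

/-- the continuous dual of `A^{p,1,q,r}_{ϑ₁,ϑ₂}(ℝ^d)` is isomorphic,
via a bounded bijection with bounded inverse, to
`((L^{p'}_{ϑ₁⁻¹}, ℓ^∞) × (L^{q'}_{ϑ₂⁻¹}, ℓ^{r'}))/K`: every pair induces a bounded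
functional via the pairing (with kernel exactly `K`), and every bounded linear
functional on `A` is induced by a pair whose norm is controlled by the operator
norm (i.e. a representative of quotient norm comparable to the functional norm). -/
theorem A_dual_iso {d : ℕ} (p q r p' q' r' : ℝ)
    (hp : 1 < p) (hq : 1 < q) (hr : 1 < r)
    (hpp' : 1 / p + 1 / p' = 1) (hqq' : 1 / q + 1 / q' = 1) (hrr' : 1 / r + 1 / r' = 1)
    (ϑ₁ ϑ₂ : (Fin d → ℝ) → ℝ) (h1 : IsBeurling ϑ₁) (h2 : IsBeurling ϑ₂) :
    ∃ c₁ c₂ : ℝ, 0 < c₁ ∧ 0 < c₂ ∧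
      (∀ φ ψ : (Fin d → ℝ) → ℂ,
        MemAmalgamTop p' (fun x => (ϑ₁ x)⁻¹) φ →
        MemAmalgam q' r' (fun x => (ϑ₂ x)⁻¹) ψ →
        ∀ f : (Fin d → ℝ) → ℂ, MemA p q r ϑ₁ ϑ₂ f →
          (‖pairA φ ψ f‖₊ : ℝ≥0∞) ≤ ENNReal.ofReal c₁ *
            (amalgamNormTop p' (fun x => (ϑ₁ x)⁻¹) φ +
              amalgamNorm q' r' (fun x => (ϑ₂ x)⁻¹) ψ) * ANorm p q r ϑ₁ ϑ₂ f) ∧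
      (∀ T : ((Fin d → ℝ) → ℂ) → ℂ,
        (∀ f g : (Fin d → ℝ) → ℂ, MemA p q r ϑ₁ ϑ₂ f → MemA p q r ϑ₁ ϑ₂ g →
          T (fun x => f x + g x) = T f + T g) →
        (∀ (a : ℂ) (f : (Fin d → ℝ) → ℂ), MemA p q r ϑ₁ ϑ₂ f →
          T (fun x => a * f x) = a * T f) →
        ∀ M : ℝ, 0 ≤ M →
        (∀ f : (Fin d → ℝ) → ℂ, MemA p q r ϑ₁ ϑ₂ f →
          (‖T f‖₊ : ℝ≥0∞) ≤ ENNReal.ofReal M * ANorm p q r ϑ₁ ϑ₂ f) →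
        ∃ φ ψ : (Fin d → ℝ) → ℂ,
          MemAmalgamTop p' (fun x => (ϑ₁ x)⁻¹) φ ∧
          MemAmalgam q' r' (fun x => (ϑ₂ x)⁻¹) ψ ∧
          (∀ f : (Fin d → ℝ) → ℂ, MemA p q r ϑ₁ ϑ₂ f → T f = pairA φ ψ f) ∧
          amalgamNormTop p' (fun x => (ϑ₁ x)⁻¹) φ +
            amalgamNorm q' r' (fun x => (ϑ₂ x)⁻¹) ψ ≤ ENNReal.ofReal (c₂ * M)) := by
  have hpp : p.HolderConjugate p' :=
    Real.holderConjugate_iff.2 ⟨hp, by simpa only [one_div] using hpp'⟩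
  have hqq : q.HolderConjugate q' :=
    Real.holderConjugate_iff.2 ⟨hq, by simpa only [one_div] using hqq'⟩
  have hrr : r.HolderConjugate r' :=
    Real.holderConjugate_iff.2 ⟨hr, by simpa only [one_div] using hrr'⟩
  refine ⟨1, 6, one_pos, by norm_num, ?_, ?_⟩
  · intro φ ψ hφ hψ f hf
    rw [ENNReal.ofReal_one, one_mul]
    exact pair_bound hpp hqq hrr h1 h2 hφ.1 hψ.1 hf
  · intro T hTa hTs M hM hTb
    exact surj hpp hqq hrr h1 h2 T hTa hTs M hM hTb
end

section
/- Let ϑ₁, ϑ₂, ϑ₃ be Beurling weights on ℝ^d and 1 ≤ p, q₁, q₂, r₁, r₂ < ∞. If ϑ₃ ≺ ϑ₁, q₂ ≤ q₁ and r₁ ≤ r₂, then A^{p,1,q₁,r₁}_{ϑ₁,ϑ₂}(ℝ^d) is continuously embedded in A^{p,1,q₂,r₂}_{ϑ₃,ϑ₂}(ℝ^d): every f ∈ A^{p,1,q₁,r₁}_{ϑ₁,ϑ₂}(ℝ^d) belongs to A^{p,1,q₂,r₂}_{ϑ₃,ϑ₂}(ℝ^d) and there exists C > 0 with ‖f‖_{A^{p,1,q₂,r₂}_{ϑ₃,ϑ₂}}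 ≤ C·‖f‖_{A^{p,1,q₁,r₁}_{ϑ₁,ϑ₂}} for all such f. -/
open MeasureTheory Filter Topology
open scoped ENNReal NNReal BigOperators

lemma cube_volume_aux {d : ℕ} (α : Fin d → ℤ) : volume (cube α) = 1 := by
  unfold cube
  rw [Real.volume_pi_Ico]
  simp

lemma lr_mono_aux {ι : Type*} (a : ι → ℝ≥0∞) {r s : ℝ} (hr : 1 ≤ r) (hrs : r ≤ s) :
    (∑' i, a i ^ s) ^ (1 / s) ≤ (∑' i, a i ^ r) ^ (1 / r) := by
  have hr0 : 0 < r := by linarith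
  have hs0 : 0 < s := by linarith
  set S := (∑' i, a i ^ r) ^ (1 / r) with hS
  have hSr : S ^ r = ∑' i, a i ^ r := by
    rw [hS, ← ENNReal.rpow_mul, one_div_mul_cancel hr0.ne', ENNReal.rpow_one]
  have ha : ∀ i, a i ≤ S := by
    intro i
    rw [← ENNReal.rpow_le_rpow_iff hr0, hSr]
    exact ENNReal.le_tsum i
  rw [← ENNReal.rpow_le_rpow_iff hs0, ← ENNReal.rpow_mul, one_div_mul_cancel hs0.ne',
    ENNReal.rpow_one]
  calc ∑' i, a i ^ s ≤ ∑' i, a i ^ r * S ^ (s - r) := by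
        refine ENNReal.tsum_le_tsum fun i => ?_
        calc a i ^ s = a i ^ r * a i ^ (s - r) := by
              rw [← ENNReal.rpow_add_of_nonneg _ _ hr0.le (by linarith)]; congr 1; ring
          _ ≤ _ := by
              gcongr
              · exact ha i
    _ = S ^ r * S ^ (s - r) := by rw [ENNReal.tsum_mul_right, hSr]
    _ = S ^ s := by
        rw [← ENNReal.rpow_add_of_nonneg _ _ hr0.le (by linarith)]; congr 1; ring

lemma amalgam_mono_aux {d : ℕ} {q₁ q₂ r₁ r₂ : ℝ} (hr₁ : 1 ≤ r₁)
    (hq : q₂ ≤ q₁) (hr : r₁ ≤ r₂) {ω : (Fin d → ℝ) → ℝ} (hω : Measurable ω)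
    {f : (Fin d → ℝ) → ℂ} (hf : Measurable f) :
    amalgamNorm q₂ r₂ ω f ≤ amalgamNorm q₁ r₁ ω f := by
  refine le_trans (lr_mono_aux _ hr₁ hr) ?_
  unfold amalgamNorm
  have hr0 : 0 < r₁ := by linarith
  refine ENNReal.rpow_le_rpow (ENNReal.tsum_le_tsum fun α =>
    ENNReal.rpow_le_rpow ?_ hr0.le) (by positivity)
  haveI : IsProbabilityMeasure ((volume : Measure (Fin d → ℝ)).restrict (cube α)) :=
    ⟨by rw [Measure.restrict_apply_univ, cube_volume_aux]⟩
  exact eLpNorm_le_eLpNorm_of_exponent_le (ENNReal.ofReal_le_ofReal hq)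
    (hω.smul hf).aestronglyMeasurable

lemma amalgam_weight_aux {d : ℕ} {p C : ℝ} {ω ω' : (Fin d → ℝ) → ℝ} 
    (hω : ∀ x, 1 ≤ ω x) (hω' : ∀ x, 1 ≤ ω' x) (h : ∀ x, ω x ≤ C * ω' x)
    (f : (Fin d → ℝ) → ℂ) :
    amalgamNorm p 1 ω f ≤ ENNReal.ofReal C * amalgamNorm p 1 ω' f := by
  unfold amalgamNorm
  simp only [ENNReal.rpow_one, div_one]
  rw [← ENNReal.tsum_mul_left]
  refine ENNReal.tsum_le_tsum fun α => ?_
  refine eLpNorm_le_mul_eLpNorm_of_ae_le_mul (Eventually.of_forall fun x => ?_) _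
  have a := hω x
  have b := hω' x
  rw [norm_smul, norm_smul, Real.norm_of_nonneg (by linarith), Real.norm_of_nonneg (by linarith),
    ← mul_assoc]
  exact mul_le_mul_of_nonneg_right (h x) (norm_nonneg _)

/-- if `ϑ₃ ≺ ϑ₁`, `q₂ ≤ q₁` and `r₁ ≤ r₂` then
`A^{p,1,q₁,r₁}_{ϑ₁,ϑ₂}(ℝ^d) ↪ A^{p,1,q₂,r₂}_{ϑ₃,ϑ₂}(ℝ^d)` continuously. -/
theorem A_embedding_mixed {d : ℕ} (p q₁ q₂ r₁ r₂ : ℝ)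
    (hp : 1 ≤ p) (hq₁ : 1 ≤ q₁) (hq₂ : 1 ≤ q₂) (hr₁ : 1 ≤ r₁) (hr₂ : 1 ≤ r₂)
    (hq : q₂ ≤ q₁) (hr : r₁ ≤ r₂)
    (ϑ₁ ϑ₂ ϑ₃ : (Fin d → ℝ) → ℝ)
    (h1 : IsBeurling ϑ₁) (h2 : IsBeurling ϑ₂) (h3 : IsBeurling ϑ₃)
    (h31 : Prec ϑ₃ ϑ₁) :
    ∃ C : ℝ, 0 < C ∧ ∀ f : (Fin d → ℝ) → ℂ, MemA p q₁ r₁ ϑ₁ ϑ₂ f →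
      MemA p q₂ r₂ ϑ₃ ϑ₂ f ∧
      ANorm p q₂ r₂ ϑ₃ ϑ₂ f ≤ ENNReal.ofReal C * ANorm p q₁ r₁ ϑ₁ ϑ₂ f := by
  obtain ⟨C, hC, h⟩ := h31
  refine ⟨max C 1, by positivity, fun f hf => ?_⟩
  obtain ⟨⟨hfm, hf1⟩, ⟨hgm, hg⟩⟩ := hf
  have hA := amalgam_weight_aux (p := p) h3.2.1 h1.2.1 h f
  have hB := amalgam_mono_aux hr₁ hq hr h2.1 hgm
  refine ⟨⟨⟨hfm, hA.trans_lt (ENNReal.mul_lt_top ENNReal.ofReal_lt_top hf1)⟩,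
    ⟨hgm, hB.trans_lt hg⟩⟩, ?_⟩
  unfold ANorm
  rw [mul_add]
  refine add_le_add (hA.trans ?_) (hB.trans ?_)
  · gcongr
    exact le_max_left _ _
  · refine le_mul_of_one_le_left' ?_
    rw [ENNReal.one_le_ofReal]
    exact le_max_right _ _
end
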